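/- Let ω ⊂ ℝ^d be a nonempty open connected set and v : ℝ^d → ℝ^d a Lipschitz, uniformly bounded vector field. Let μ⁰, μ¹ be compactly supported probability measures on ℝ^d satisfying the geometric condition. Then there exists T > 0 and a pair (𝟙_ω u, μ) consisting of a Borel vector field 𝟙_ω u : ℝ^d × ℝ⁺ → ℝ^d vanishing outside ω and a time-evolving compactly supported measure μ, such that (μ, v + 𝟙_ω u) is a weak solution of ∂_t μ + ∇·((v + 𝟙_ω u) μ) = 0 on [0,T] with μ(0) = μ⁰ and μ(T) = μ¹. -/

import Mathlib

open MeasureTheory Set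
open scoped ENNReal NNReal

noncomputable section

/-- The Euclidean space `ℝ^d`. -/
abbrev Euc (d : ℕ) := EuclideanSpace ℝ (Fin d)

/-- The support of a Borel measure: points all of whose open neighborhoods have
positive measure. -/
def msupport {d : ℕ} (μ : Measure (Euc d)) : Set (Euc d) :=
  {x | ∀ U : Set (Euc d), IsOpen U → x ∈ U → 0 < μ U}

/-- `Φ` is the flow of the (time-dependent) vector field `w`, in the Carathéodory
(integral) sense. -/
def IsFlow {d : ℕ} (w : Euc d → ℝ → Euc d) (Φ : ℝ → Euc d → Euc d) : Prop :=
  ∀ x t, Φ t x = x + ∫ s in (0:ℝ)..t, w (Φ s x) s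

/-- `(μ, w)` is a weak solution of the continuity equation
`∂ₜ μ + ∇·(w μ) = 0` on the time interval `[0, T]`: the velocity is integrable
against the curve of measures, and the distributional formulation (integrated in
time) holds for every smooth compactly supported test function. -/
def IsWeakSolutionOn {d : ℕ} (T : ℝ) (w : Euc d → ℝ → Euc d)
    (μ : ℝ → Measure (Euc d)) : Prop :=
  (∫⁻ t in Icc (0:ℝ) T, ∫⁻ x, (‖w x t‖₊ : ℝ≥0∞) ∂(μ t)) < ⊤ ∧
  ∀ ψ : Euc d → ℝ, ContDiff ℝ (⊤ : ℕ∞) ψ → HasCompactSupport ψ →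
    ∀ t ∈ Icc (0:ℝ) T,
      (∫ x, ψ x ∂(μ t)) - (∫ x, ψ x ∂(μ 0))
        = ∫ s in Icc (0:ℝ) t, (∫ x, (inner ℝ (gradient ψ x) (w x s) : ℝ) ∂(μ s))

/-!
Every point of `supp μ⁰` is carried into `ω` by the flow of `v`, and inside `ω` the control may
impose any velocity, so it can be brought to a fixed point `p ∈ ω`. By compactness this is done for
all of `supp μ⁰` in a common time, by curves depending measurably on the initial point. Running the
same construction for `-v` backwards in time carries `p` to every point of `supp μ¹`.
Concatenation yields a curve for each pair `(x⁰, x¹)`; distributing the pairs according to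
`μ⁰ × μ¹`, the laws of the positions interpolate between `μ⁰` and `μ¹`. The curves cross, so their
velocity is not a function of position and time, but its conditional expectation given position and
time is a Borel field that satisfies the continuity equation in the weak sense, and it equals `v`
outside `ω` because each curve has velocity `v` there.
-/

open Filter Function Metric
open scoped Topology

section Curves

variable {E : Type*} [NormedAddCommGroup E] [NormedSpace ℝ E]
  {γ γ' δ δ' : ℝ → E} {v : E → E} {ω : Set E} {T T₁ T₂ : ℝ}

/-- On `[0, T]` the curve `γ` is continuous and, except at countably many times, has velocity `γ'`.
The exceptional times make the notion stable under concatenation, and countability keeps the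
fundamental theorem of calculus available. -/
structure HasVelocityOn (T : ℝ) (γ γ' : ℝ → E) : Prop where
  hasDerivAt : ∃ S : Set ℝ, S.Countable ∧ ∀ t ∈ Ioo 0 T \ S, HasDerivAt γ (γ' t) t
  continuousOn : ContinuousOn γ (Icc 0 T)

/-- A trajectory on `[0, T]` of the drift `v` with a control localized in `ω`: its velocity is
free inside `ω` and equal to `v` outside. -/
structure IsControlledCurve (v : E → E) (ω : Set E) (T : ℝ) (γ γ' : ℝ → E) : Prop
    extends HasVelocityOn T γ γ' where
  eq_drift : ∀ t ∈ Icc 0 T, γ t ∉ ω → γ' t = v (γ t)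

/-- Follow `γ` up to time `T₁`, then `δ` with its clock restarted. -/
def concatAt {β : Type*} (T₁ : ℝ) (γ δ : ℝ → β) (t : ℝ) : β :=
  if t ≤ T₁ then γ t else δ (t - T₁)

theorem concatAt_of_le {β : Type*} {γ δ : ℝ → β} {t : ℝ} (ht : t ≤ T₁) :
    concatAt T₁ γ δ t = γ t := if_pos ht

theorem concatAt_of_lt {β : Type*} {γ δ : ℝ → β} {t : ℝ} (ht : T₁ < t) :
    concatAt T₁ γ δ t = δ (t - T₁) := if_neg ht.not_ge

theorem concatAt_of_ge {β : Type*} {γ δ : ℝ → β} (h : γ T₁ = δ 0) {t : ℝ} (ht : T₁ ≤ t) :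
    concatAt T₁ γ δ t = δ (t - T₁) := by
  rcases ht.eq_or_lt with rfl | ht
  · rw [concatAt_of_le le_rfl, h, sub_self]
  · exact concatAt_of_lt ht

theorem measurable_uncurry_concatAt {α β : Type*} [MeasurableSpace α] [MeasurableSpace β]
    {X Y : ℝ → α → β} (hX : Measurable (uncurry X)) (hY : Measurable (uncurry Y)) :
    Measurable (uncurry fun t a => concatAt T₁ (X · a) (Y · a) t) :=
  hX.ite (measurableSet_le measurable_fst measurable_const)
    (hY.comp ((measurable_fst.sub_const T₁).prodMk measurable_snd))

theorem continuousOn_concatAt {β : Type*} [TopologicalSpace β] {γ δ : ℝ → β}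
    (hγ : ContinuousOn γ (Icc 0 T₁)) (hδ : ContinuousOn δ (Icc 0 T₂)) (h : γ T₁ = δ 0) :
    ContinuousOn (concatAt T₁ γ δ) (Icc 0 (T₁ + T₂)) := by
  have hfst : ContinuousOn (concatAt T₁ γ δ) (Icc 0 T₁) :=
    hγ.congr fun t ht => concatAt_of_le ht.2
  have hsnd : ContinuousOn (concatAt T₁ γ δ) (Icc T₁ (T₁ + T₂)) := by
    refine (hδ.comp (f := fun t => t - T₁) (by fun_prop) fun t ht => ?_).congr
      fun t ht => concatAt_of_ge h ht.1
    exact ⟨sub_nonneg.2 ht.1, sub_le_iff_le_add'.2 ht.2⟩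
  refine (hfst.union_of_isClosed hsnd isClosed_Icc isClosed_Icc).mono fun t ht => ?_
  exact (le_total t T₁).imp (fun h => ⟨ht.1, h⟩) fun h => ⟨h, ht.2⟩

theorem HasVelocityOn.of_forall_hasDerivAt (h : ∀ t, HasDerivAt γ (γ' t) t) :
    HasVelocityOn T γ γ' where
  continuousOn t _ := (h t).continuousAt.continuousWithinAt
  hasDerivAt := ⟨∅, countable_empty, fun t _ => h t⟩

theorem HasVelocityOn.reverse (h : HasVelocityOn T γ γ') :
    HasVelocityOn T (fun t => γ (T - t)) (fun t => -γ' (T - t)) where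
  continuousOn := h.continuousOn.comp (by fun_prop) fun t ht =>
    ⟨sub_nonneg.2 ht.2, by linarith [ht.1]⟩
  hasDerivAt := by
    obtain ⟨S, hS, hd⟩ := h.hasDerivAt
    refine ⟨(T - ·) ⁻¹' S, hS.preimage sub_right_injective, fun t ht => ?_⟩
    exact (hd (T - t) ⟨⟨sub_pos.2 ht.1.2, sub_lt_self T ht.1.1⟩, ht.2⟩).comp_const_sub T t

theorem HasVelocityOn.concatAt (hγ : HasVelocityOn T₁ γ γ') (hδ : HasVelocityOn T₂ δ δ')
    (h : γ T₁ = δ 0) : HasVelocityOn (T₁ + T₂) (concatAt T₁ γ δ) (concatAt T₁ γ' δ') where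
  continuousOn := continuousOn_concatAt hγ.continuousOn hδ.continuousOn h
  hasDerivAt := by
    obtain ⟨S, hS, hdγ⟩ := hγ.hasDerivAt
    obtain ⟨S', hS', hdδ⟩ := hδ.hasDerivAt
    refine ⟨insert T₁ (S ∪ (· - T₁) ⁻¹' S'),
      (hS.union (hS'.preimage sub_left_injective)).insert T₁, fun t ⟨ht, htS⟩ => ?_⟩
    simp only [mem_insert_iff, mem_union, mem_preimage, not_or] at htS
    obtain ⟨hne, htS, htS'⟩ := htS
    rcases lt_or_gt_of_ne hne with hlt | hgt
    · rw [concatAt_of_le hlt.le]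
      refine (hdγ t ⟨⟨ht.1, hlt⟩, htS⟩).congr_of_eventuallyEq ?_
      filter_upwards [Iio_mem_nhds hlt] with r hr using concatAt_of_le (le_of_lt hr)
    · rw [concatAt_of_lt hgt]
      have hd := hdδ (t - T₁) ⟨⟨sub_pos.2 hgt, sub_lt_iff_lt_add'.2 ht.2⟩, htS'⟩
      refine (hd.comp_sub_const t T₁).congr_of_eventuallyEq ?_
      filter_upwards [Ioi_mem_nhds hgt] with r hr using concatAt_of_lt hr

theorem IsControlledCurve.reverse (h : IsControlledCurve v ω T γ γ') :
    IsControlledCurve (fun x => -v x) ω T (fun t => γ (T - t)) (fun t => -γ' (T - t)) where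
  toHasVelocityOn := h.toHasVelocityOn.reverse
  eq_drift t ht hω :=
    congrArg Neg.neg (h.eq_drift (T - t) ⟨sub_nonneg.2 ht.2, by linarith [ht.1]⟩ hω)

theorem IsControlledCurve.concatAt (hγ : IsControlledCurve v ω T₁ γ γ')
    (hδ : IsControlledCurve v ω T₂ δ δ') (h : γ T₁ = δ 0) :
    IsControlledCurve v ω (T₁ + T₂) (concatAt T₁ γ δ) (concatAt T₁ γ' δ') where
  toHasVelocityOn := hγ.toHasVelocityOn.concatAt hδ.toHasVelocityOn h
  eq_drift t ht := by
    rcases le_or_gt t T₁ with hle | hlt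
    · simp only [concatAt_of_le hle]
      exact hγ.eq_drift t ⟨ht.1, hle⟩
    · simp only [concatAt_of_lt hlt]
      exact hδ.eq_drift _ ⟨sub_nonneg.2 hlt.le, sub_le_iff_le_add'.2 ht.2⟩

end Curves

section Steering

variable {E α β : Type*} [NormedAddCommGroup E] [NormedSpace ℝ E] [MeasurableSpace E]
  [MeasurableSpace α] [MeasurableSpace β]
  {v : E → E} {ω : Set E} {T T₁ T₂ : ℝ} {f g h : α → E} {s s₁ s₂ : Set α}

/-- The curves `X · a`, with velocities `V · a`, depend measurably on the label `a` and, for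
`a ∈ s`, are uniformly bounded controlled curves from `f a` to `g a` in time `T`. -/
structure IsSteering (v : E → E) (ω : Set E) (T : ℝ) (f g : α → E) (s : Set α)
    (X V : ℝ → α → E) : Prop where
  measurable_position : Measurable (uncurry X)
  measurable_velocity : Measurable (uncurry V)
  isBounded : Bornology.IsBounded (image2 (fun t a => (X t a, V t a)) (Icc 0 T) s)
  isControlledCurve : ∀ a ∈ s, IsControlledCurve v ω T (X · a) (V · a)
  initial : ∀ a ∈ s, X 0 a = f a
  final : ∀ a ∈ s, X T a = g a

/-- The points `f a`, `a ∈ s`, can be steered to `g a` simultaneously in time `T`, by a measurable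
bounded family of trajectories of the drift `v` controlled in `ω`. Trajectories with different
labels may cross. -/
def Steerable (v : E → E) (ω : Set E) (T : ℝ) (f g : α → E) (s : Set α) : Prop :=
  ∃ X V : ℝ → α → E, IsSteering v ω T f g s X V

namespace IsSteering

variable {X V X' V' : ℝ → α → E}

theorem mono (h : IsSteering v ω T f g s₂ X V) (hs : s₁ ⊆ s₂) : IsSteering v ω T f g s₁ X V where
  measurable_position := h.measurable_position
  measurable_velocity := h.measurable_velocity
  isBounded := h.isBounded.subset (image2_subset_left hs)
  isControlledCurve a ha := h.isControlledCurve a (hs ha)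
  initial a ha := h.initial a (hs ha)
  final a ha := h.final a (hs ha)

theorem congr (h : IsSteering v ω T f g s X V) (hX' : Measurable (uncurry X'))
    (hV' : Measurable (uncurry V')) (hX : ∀ t, EqOn (X' t) (X t) s)
    (hV : ∀ t, EqOn (V' t) (V t) s) : IsSteering v ω T f g s X' V' where
  measurable_position := hX'
  measurable_velocity := hV'
  isBounded := by
    convert h.isBounded using 1
    exact image2_congr fun t _ a ha => by rw [hX t ha, hV t ha]
  isControlledCurve a ha := by
    simpa only [hX _ ha, hV _ ha] using h.isControlledCurve a ha
  initial a ha := (hX 0 ha).trans (h.initial a ha)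
  final a ha := (hX T ha).trans (h.final a ha)

theorem union (h₁ : IsSteering v ω T f g s₁ X V) (h₂ : IsSteering v ω T f g s₂ X V) :
    IsSteering v ω T f g (s₁ ∪ s₂) X V where
  measurable_position := h₁.measurable_position
  measurable_velocity := h₁.measurable_velocity
  isBounded := by
    rw [image2_union_right]
    exact h₁.isBounded.union h₂.isBounded
  isControlledCurve a := Or.rec (h₁.isControlledCurve a) (h₂.isControlledCurve a)
  initial a := Or.rec (h₁.initial a) (h₂.initial a)
  final a := Or.rec (h₁.final a) (h₂.final a)

end IsSteering

namespace Steerable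

theorem mono (h : Steerable v ω T f g s₂) (hs : s₁ ⊆ s₂) : Steerable v ω T f g s₁ := by
  obtain ⟨X, V, h⟩ := h
  exact ⟨X, V, h.mono hs⟩

theorem of_empty : Steerable v ω T f g ∅ :=
  ⟨0, 0, measurable_const, measurable_const, by simp, by simp, by simp, by simp⟩

theorem comp (h : Steerable v ω T f g s) {φ : β → α} (hφ : Measurable φ) :
    Steerable v ω T (f ∘ φ) (g ∘ φ) (φ ⁻¹' s) := by
  obtain ⟨X, V, h⟩ := h
  refine ⟨fun t b => X t (φ b), fun t b => V t (φ b),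
    h.measurable_position.comp (measurable_fst.prodMk (hφ.comp measurable_snd)),
    h.measurable_velocity.comp (measurable_fst.prodMk (hφ.comp measurable_snd)),
    h.isBounded.subset ?_, fun b hb => h.isControlledCurve (φ b) hb,
    fun b hb => h.initial (φ b) hb, fun b hb => h.final (φ b) hb⟩
  rintro _ ⟨t, ht, b, hb, rfl⟩
  exact ⟨t, ht, φ b, hb, rfl⟩

theorem union (h₁ : Steerable v ω T f g s₁) (h₂ : Steerable v ω T f g s₂)
    (hs : MeasurableSet s₁) : Steerable v ω T f g (s₁ ∪ s₂) := by
  classical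
  obtain ⟨X₁, V₁, h₁⟩ := h₁
  obtain ⟨X₂, V₂, h₂⟩ := h₂
  let X t := s₁.piecewise (X₁ t) (X₂ t)
  let V t := s₁.piecewise (V₁ t) (V₂ t)
  have hmem : MeasurableSet {q : ℝ × α | q.2 ∈ s₁} := measurable_snd hs
  have hX : Measurable (uncurry X) := h₁.measurable_position.ite hmem h₂.measurable_position
  have hV : Measurable (uncurry V) := h₁.measurable_velocity.ite hmem h₂.measurable_velocity
  have on_s₁ : IsSteering v ω T f g s₁ X V :=
    h₁.congr hX hV (fun t => piecewise_eqOn s₁ _ _) (fun t => piecewise_eqOn s₁ _ _)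
  have on_diff : IsSteering v ω T f g (s₂ \ s₁) X V :=
    (h₂.mono sdiff_subset).congr hX hV
      (fun t => (piecewise_eqOn_compl s₁ _ _).mono fun _ ha => ha.2)
      (fun t => (piecewise_eqOn_compl s₁ _ _).mono fun _ ha => ha.2)
  rw [← union_sdiff_self]
  exact ⟨X, V, on_s₁.union on_diff⟩

theorem reverse [BorelSpace E] (h : Steerable v ω T f g s) :
    Steerable (fun x => -v x) ω T g f s := by
  obtain ⟨X, V, h⟩ := h
  have htime : Measurable fun q : ℝ × α => (T - q.1, q.2) := by fun_prop
  refine ⟨fun t a => X (T - t) a, fun t a => -V (T - t) a, h.measurable_position.comp htime,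
    (h.measurable_velocity.comp htime).neg, ?_, fun a ha => (h.isControlledCurve a ha).reverse,
    fun a ha => by rw [sub_zero, h.final a ha], fun a ha => by rw [sub_self, h.initial a ha]⟩
  obtain ⟨C, hC⟩ := h.isBounded.exists_norm_le
  refine isBounded_iff_forall_norm_le.2 ⟨C, ?_⟩
  rintro _ ⟨t, ht, a, ha, rfl⟩
  have := hC _ (mem_image2_of_mem (a := T - t) ⟨sub_nonneg.2 ht.2, by linarith [ht.1]⟩ ha)
  simpa only [Prod.norm_mk, norm_neg] using this

theorem trans (hT₁ : 0 ≤ T₁) (hT₂ : 0 ≤ T₂) (hfg : Steerable v ω T₁ f g s)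
    (hgh : Steerable v ω T₂ g h s) : Steerable v ω (T₁ + T₂) f h s := by
  obtain ⟨X, V, hX⟩ := hfg
  obtain ⟨Y, W, hY⟩ := hgh
  have hmeet (a : α) (ha : a ∈ s) : X T₁ a = Y 0 a := by rw [hX.final a ha, hY.initial a ha]
  refine ⟨fun t a => concatAt T₁ (X · a) (Y · a) t, fun t a => concatAt T₁ (V · a) (W · a) t,
    measurable_uncurry_concatAt hX.measurable_position hY.measurable_position,
    measurable_uncurry_concatAt hX.measurable_velocity hY.measurable_velocity,
    (hX.isBounded.union hY.isBounded).subset ?_,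
    fun a ha => (hX.isControlledCurve a ha).concatAt (hY.isControlledCurve a ha) (hmeet a ha),
    fun a ha => (concatAt_of_le hT₁).trans (hX.initial a ha), fun a ha => ?_⟩
  · rintro _ ⟨t, ht, a, ha, rfl⟩
    rcases le_or_gt t T₁ with hle | hlt
    · simp only [concatAt_of_le hle]
      exact .inl (mem_image2_of_mem ⟨ht.1, hle⟩ ha)
    · simp only [concatAt_of_lt hlt]
      exact .inr (mem_image2_of_mem (a := t - T₁)
        ⟨sub_nonneg.2 hlt.le, sub_le_iff_le_add'.2 ht.2⟩ ha)
  · rw [concatAt_of_ge (hmeet a ha) (le_add_of_nonneg_right hT₂), add_sub_cancel_left,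
      hY.final a ha]

theorem prod_of_const {p : E} {g : β → E} {s₂ : Set β} (hT₁ : 0 ≤ T₁) (hT₂ : 0 ≤ T₂)
    (gather : Steerable v ω T₁ f (fun _ => p) s) (spread : Steerable v ω T₂ (fun _ => p) g s₂) :
    Steerable v ω (T₁ + T₂) (f ∘ Prod.fst) (g ∘ Prod.snd) (s ×ˢ s₂) :=
  trans hT₁ hT₂ ((gather.comp measurable_fst).mono fun _ hq => hq.1)
    ((spread.comp measurable_snd).mono fun _ hq => hq.2)

variable [BorelSpace E] [SecondCountableTopology E]

theorem of_convex {U : Set E} (hU : Convex ℝ U) (hUb : Bornology.IsBounded U) (hUω : U ⊆ ω)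
    (hT : 0 < T) (hf : Measurable f) (hg : Measurable g) (hfU : MapsTo f s U)
    (hgU : MapsTo g s U) : Steerable v ω T f g s := by
  have hmem (a : α) (ha : a ∈ s) (t : ℝ) (ht : t ∈ Icc 0 T) :
      f a + (t / T) • (g a - f a) ∈ U :=
    hU.add_smul_sub_mem (hfU ha) (hgU ha) ⟨div_nonneg ht.1 hT.le, (div_le_one hT).2 ht.2⟩
  refine ⟨fun t a => f a + (t / T) • (g a - f a), fun _ a => T⁻¹ • (g a - f a), ?_, ?_, ?_,
    fun a ha => ⟨.of_forall_hasDerivAt fun t => ?_, fun t ht hω => ?_⟩, by simp, by simp [hT.ne']⟩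
  · unfold uncurry; fun_prop
  · unfold uncurry; fun_prop
  · refine (hUb.prod ((hUb.sub hUb).smul₀ T⁻¹)).subset ?_
    rintro _ ⟨t, ht, a, ha, rfl⟩
    exact ⟨hmem a ha t ht, smul_mem_smul_set (sub_mem_sub (hgU ha) (hfU ha))⟩
  · simpa using (((hasDerivAt_id t).div_const T).smul_const (g a - f a)).const_add (f a)
  · exact absurd (hUω (hmem a ha t ht)) hω

theorem const_of_isPreconnected (hωo : IsOpen ω) (hωc : IsPreconnected ω) {p q : E} (hp : p ∈ ω)
    (hq : q ∈ ω) (hT : 0 < T) : Steerable v ω T (fun _ => p) (fun _ => q) s := by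
  refine hωc.induction₂' (fun p q => ∀ T, 0 < T → Steerable v ω T (fun _ => p) (fun _ => q) s)
    (fun x hx => ?_) (fun x y z _ _ _ hxy hyz T hT => ?_) hp hq T hT
  · obtain ⟨r, hr, hball⟩ := isOpen_iff.1 hωo x hx
    have segment {y z : E} (hy : y ∈ ball x r) (hz : z ∈ ball x r) (T : ℝ) (hT : 0 < T) :
        Steerable v ω T (fun _ => y) (fun _ => z) s :=
      of_convex (convex_ball x r) isBounded_ball hball hT measurable_const measurable_const
        (fun _ _ => hy) (fun _ _ => hz)
    filter_upwards [mem_nhdsWithin_of_mem_nhds (ball_mem_nhds x hr)] with y hy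
    exact ⟨segment (mem_ball_self hr) hy, segment hy (mem_ball_self hr)⟩
  · simpa only [add_halves] using
      trans (half_pos hT).le (half_pos hT).le (hxy _ (half_pos hT)) (hyz _ (half_pos hT))

end Steerable

theorem eventually_steerable_of_isCompact [TopologicalSpace α] [OpensMeasurableSpace α]
    (hs : IsCompact s)
    (hloc : ∀ a ∈ s, ∃ U ∈ 𝓝 a, ∀ᶠ T in atTop, Steerable v ω T f g U) :
    ∀ᶠ T in atTop, Steerable v ω T f g s := by
  obtain ⟨U, -, hsU, hU⟩ :
      ∃ U, MeasurableSet U ∧ s ⊆ U ∧ ∀ᶠ T in atTop, Steerable v ω T f g U := by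
    refine hs.induction_on
      (p := fun s => ∃ U, MeasurableSet U ∧ s ⊆ U ∧ ∀ᶠ T in atTop, Steerable v ω T f g U)
      ⟨∅, .empty, subset_rfl, .of_forall fun _ => .of_empty⟩ ?_ ?_ fun a ha => ?_
    · rintro s₁ s₂ hs ⟨U, hU, hsU, h⟩
      exact ⟨U, hU, hs.trans hsU, h⟩
    · rintro s₁ s₂ ⟨U₁, hU₁, hsU₁, h₁⟩ ⟨U₂, hU₂, hsU₂, h₂⟩
      exact ⟨U₁ ∪ U₂, hU₁.union hU₂, union_subset_union hsU₁ hsU₂,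
        (h₁.and h₂).mono fun T h => h.1.union h.2 hU₁⟩
    · obtain ⟨U, hU, h⟩ := hloc a ha
      exact ⟨interior U, mem_nhdsWithin_of_mem_nhds (interior_mem_nhds.2 hU), interior U,
        isOpen_interior.measurableSet, subset_rfl, h.mono fun T hT => hT.mono interior_subset⟩
  exact hU.mono fun T h => h.mono hsU

end Steering

section Flow

theorem ordConnected_setOf_intervalIntegrable {E : Type*} [NormedAddCommGroup E] (F : ℝ → E)
    (a : ℝ) : {t | IntervalIntegrable F volume a t}.OrdConnected := by
  refine ⟨fun s hs t ht r hr => ?_⟩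
  rcases le_total a r with har | hra
  · exact IntervalIntegrable.mono_set ht (by
      rw [uIcc_of_le har, uIcc_of_le (har.trans hr.2)]; exact Icc_subset_Icc_right hr.2)
  · exact IntervalIntegrable.mono_set hs (by
      rw [uIcc_of_ge hra, uIcc_of_ge (hr.1.trans hra)]; exact Icc_subset_Icc_left hr.1)

-- At times where `F` fails to be integrable the primitive has the junk value `0`.
theorem measurable_primitive_of_bounded {E : Type*} [NormedAddCommGroup E] [NormedSpace ℝ E]
    [MeasurableSpace E] [BorelSpace E] {F : ℝ → E} {C : ℝ} (hF : ∀ t, ‖F t‖ ≤ C) (a : ℝ) :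
    Measurable fun t => ∫ s in a..t, F s := by
  classical
  let S := {t | IntervalIntegrable F volume a t}
  have hC : 0 ≤ C := (norm_nonneg _).trans (hF a)
  have hlip : LipschitzOnWith C.toNNReal (fun t => ∫ s in a..t, F s) S := by
    refine .of_dist_le_mul fun s hs t ht => ?_
    rw [dist_eq_norm, intervalIntegral.integral_interval_sub_left hs ht, Real.coe_toNNReal _ hC]
    exact intervalIntegral.norm_integral_le_of_norm_le_const fun r _ => hF r
  have hpiecewise : (fun t => ∫ s in a..t, F s) = S.piecewise (fun t => ∫ s in a..t, F s) 0 := by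
    refine (piecewise_same S _).symm.trans (funext fun t => ?_)
    by_cases ht : t ∈ S
    · rw [piecewise_eq_of_mem _ _ _ ht, piecewise_eq_of_mem _ _ _ ht]
    · rw [piecewise_eq_of_notMem _ _ _ ht, piecewise_eq_of_notMem _ _ _ ht]
      exact intervalIntegral.integral_undef ht
  rw [hpiecewise]
  exact hlip.continuousOn.measurable_piecewise continuousOn_const
    (ordConnected_setOf_intervalIntegrable F a).measurableSet

namespace IsFlow

variable {d : ℕ} {v : Euc d → Euc d} {Φ : ℝ → Euc d → Euc d} {K : ℝ≥0} {C : ℝ} {ω : Set (Euc d)}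

theorem map_zero (hΦ : IsFlow (fun x _ => v x) Φ) (x : Euc d) : Φ 0 x = x := by
  simpa only [intervalIntegral.integral_same, add_zero] using hΦ x 0

theorem neg (hΦ : IsFlow (fun x _ => v x) Φ) :
    IsFlow (fun x _ => -v x) (fun t x => Φ (-t) x) := fun x t => by
  rw [intervalIntegral.integral_comp_neg (fun s => -v (Φ s x)), intervalIntegral.integral_neg,
    intervalIntegral.integral_symm, neg_neg, neg_zero]
  exact hΦ x (-t)

theorem norm_le (hΦ : IsFlow (fun x _ => v x) Φ) (hC : ∀ x, ‖v x‖ ≤ C) (t : ℝ) (x : Euc d) :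
    ‖Φ t x‖ ≤ ‖x‖ + C * |t| := by
  rw [hΦ x t]
  refine (norm_add_le _ _).trans (add_le_add_right ?_ _)
  simpa only [sub_zero] using intervalIntegral.norm_integral_le_of_norm_le_const (a := 0) (b := t)
    fun s _ => hC (Φ s x)

theorem continuous_time (hΦ : IsFlow (fun x _ => v x) Φ) (hv : Measurable v)
    (hC : ∀ x, ‖v x‖ ≤ C) (x : Euc d) : Continuous (Φ · x) := by
  have hmeas : Measurable (Φ · x) := by
    rw [funext (hΦ x)]
    exact (measurable_primitive_of_bounded (fun s => hC (Φ s x)) 0).const_add x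
  have hint (a b : ℝ) : IntervalIntegrable (fun s => v (Φ s x)) volume a b :=
    (intervalIntegrable_const (c := C)).mono_fun' (hv.comp hmeas).aestronglyMeasurable
      (.of_forall fun s => hC (Φ s x))
  rw [funext (hΦ x)]
  exact (intervalIntegral.continuous_primitive hint 0).const_add x

theorem hasDerivAt (hΦ : IsFlow (fun x _ => v x) Φ) (hv : Continuous v) (hC : ∀ x, ‖v x‖ ≤ C)
    (x : Euc d) (t : ℝ) : HasDerivAt (Φ · x) (v (Φ t x)) t := by
  have hcont : Continuous fun s => v (Φ s x) := hv.comp (hΦ.continuous_time hv.measurable hC x)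
  refine ((hcont.integral_hasStrictDerivAt 0 t).hasDerivAt.const_add x).congr_of_eventuallyEq ?_
  exact .of_forall (hΦ x)

theorem lipschitzWith_of_nonneg (hΦ : IsFlow (fun x _ => v x) Φ) (hv : LipschitzWith K v)
    (hC : ∀ x, ‖v x‖ ≤ C) {t : ℝ} (ht : 0 ≤ t) :
    LipschitzWith (Real.exp (K * t)).toNNReal (Φ t) := by
  refine .of_dist_le_mul fun x y => ?_
  have hcont (x) := (hΦ.continuous_time hv.continuous.measurable hC x).continuousOn (s := Icc 0 t)
  have hderiv (x r) := (hΦ.hasDerivAt hv.continuous hC x r).hasDerivWithinAt (s := Ici r)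
  have gronwall := dist_le_of_trajectories_ODE (v := fun _ => v) (fun _ => hv)
    (hcont x) (fun r _ => hderiv x r) (hcont y) (fun r _ => hderiv y r) le_rfl t ⟨ht, le_rfl⟩
  simpa only [hΦ.map_zero, sub_zero, Real.coe_toNNReal _ (Real.exp_pos _).le, mul_comm]
    using gronwall

theorem continuous_space (hΦ : IsFlow (fun x _ => v x) Φ) (hv : LipschitzWith K v)
    (hC : ∀ x, ‖v x‖ ≤ C) (t : ℝ) : Continuous (Φ t) := by
  rcases le_total 0 t with ht | ht
  · exact (hΦ.lipschitzWith_of_nonneg hv hC ht).continuous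
  · have hneg := hΦ.neg.lipschitzWith_of_nonneg hv.neg (fun x => (norm_neg _).trans_le (hC x))
      (neg_nonneg.2 ht)
    simpa only [neg_neg] using hneg.continuous

theorem steerable (hΦ : IsFlow (fun x _ => v x) Φ) (hv : LipschitzWith K v)
    (hC : ∀ x, ‖v x‖ ≤ C) {s : Set (Euc d)} (hs : Bornology.IsBounded s) (T : ℝ) :
    Steerable v ω T id (Φ T) s := by
  have hmeas : Measurable (uncurry Φ) :=
    measurable_uncurry_of_continuous_of_measurable
      (hΦ.continuous_time hv.continuous.measurable hC)
      fun t => (hΦ.continuous_space hv hC t).measurable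
  refine ⟨Φ, fun t x => v (Φ t x), hmeas, hv.continuous.measurable.comp hmeas, ?_,
    fun x _ => ⟨.of_forall_hasDerivAt (hΦ.hasDerivAt hv.continuous hC x), fun _ _ _ => rfl⟩,
    fun x _ => hΦ.map_zero x, fun x _ => rfl⟩
  obtain ⟨R, hR⟩ := hs.exists_norm_le
  refine isBounded_iff_forall_norm_le.2 ⟨max (R + C * T) C, ?_⟩
  rintro _ ⟨t, ht, x, hx, rfl⟩
  have hC₀ : 0 ≤ C := (norm_nonneg _).trans (hC x)
  refine max_le_max ?_ (hC _)
  calc ‖Φ t x‖ ≤ ‖x‖ + C * |t| := hΦ.norm_le hC t x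
    _ ≤ R + C * T := by rw [abs_of_nonneg ht.1]; gcongr; exacts [hR x hx, ht.2]

theorem exists_nhds_eventually_steerable (hΦ : IsFlow (fun x _ => v x) Φ)
    (hv : LipschitzWith K v) (hC : ∀ x, ‖v x‖ ≤ C) (hωo : IsOpen ω) (hωc : IsPreconnected ω)
    {p x : Euc d} (hp : p ∈ ω) {t : ℝ} (ht : 0 ≤ t) (hx : Φ t x ∈ ω) :
    ∃ U ∈ 𝓝 x, ∀ᶠ T in atTop, Steerable v ω T id (fun _ => p) U := by
  obtain ⟨r, hr, hball⟩ := isOpen_iff.1 hωo _ hx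
  have hcont := hΦ.continuous_space hv hC t
  refine ⟨Φ t ⁻¹' ball (Φ t x) r ∩ ball x 1, inter_mem (hcont.continuousAt (ball_mem_nhds _ hr))
    (ball_mem_nhds x one_pos), ?_⟩
  filter_upwards [eventually_gt_atTop t] with T hT
  set U := Φ t ⁻¹' ball (Φ t x) r ∩ ball x 1
  have hτ : 0 < (T - t) / 2 := half_pos (sub_pos.2 hT)
  have enter : Steerable v ω t id (Φ t) U :=
    hΦ.steerable hv hC (isBounded_ball.subset inter_subset_right) t
  have gather : Steerable v ω ((T - t) / 2) (Φ t) (fun _ => Φ t x) U :=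
    .of_convex (convex_ball _ r) isBounded_ball hball hτ hcont.measurable measurable_const
      (fun _ ha => ha.1) (fun _ _ => mem_ball_self hr)
  have move : Steerable v ω ((T - t) / 2) (fun _ => Φ t x) (fun _ => p) U :=
    .const_of_isPreconnected hωo hωc hx hp hτ
  simpa only [add_halves, add_sub_cancel] using
    enter.trans ht (add_pos hτ hτ).le (gather.trans hτ.le hτ.le move)

theorem eventually_steerable_const (hΦ : IsFlow (fun x _ => v x) Φ) (hv : LipschitzWith K v)
    (hC : ∀ x, ‖v x‖ ≤ C) (hωo : IsOpen ω) (hωc : IsPreconnected ω) {p : Euc d} (hp : p ∈ ω)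
    {s : Set (Euc d)} (hs : IsCompact s) (hgeo : ∀ x ∈ s, ∃ t, 0 ≤ t ∧ Φ t x ∈ ω) :
    ∀ᶠ T in atTop, Steerable v ω T id (fun _ => p) s :=
  eventually_steerable_of_isCompact hs fun x hx =>
    let ⟨_, ht, hxt⟩ := hgeo x hx
    hΦ.exists_nhds_eventually_steerable hv hC hωo hωc hp ht hxt

end IsFlow

end Flow

section ConditionalExpectation

variable {Ω β E : Type*} {mΩ : MeasurableSpace Ω} [MeasurableSpace β] {ρ : Measure Ω}
  [IsFiniteMeasure ρ] {Q : Ω → β} {D : Ω → E}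

theorem condExp_ae_eq_of_ae_eq_of_mem [NormedAddCommGroup E] [NormedSpace ℝ E] [CompleteSpace E]
    {m : MeasurableSpace Ω} (hm : m ≤ mΩ) {A : Set Ω} (hA : MeasurableSet[m] A) {f : Ω → E}
    (hf : StronglyMeasurable[m] f) (hD : Integrable D ρ) (hDf : ∀ᵐ a ∂ρ, a ∈ A → D a = f a) :
    ∀ᵐ a ∂ρ, a ∈ A → ρ[D | m] a = f a := by
  have hind : A.indicator D =ᵐ[ρ] A.indicator f := by
    filter_upwards [hDf] with a ha
    by_cases haA : a ∈ A
    · rw [indicator_of_mem haA, indicator_of_mem haA, ha haA]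
    · rw [indicator_of_notMem haA, indicator_of_notMem haA]
  have hf_ind : ρ[A.indicator f | m] = A.indicator f :=
    condExp_of_stronglyMeasurable hm (hf.indicator hA) ((hD.indicator (hm A hA)).congr hind)
  filter_upwards [condExp_indicator hD hA, condExp_congr_ae (m := m) hind] with a hcond hcongr ha
  rw [hf_ind, hcond, indicator_of_mem ha, indicator_of_mem ha] at hcongr
  exact hcongr

theorem exists_measurable_add_comp_ae_eq_condExp [NormedAddCommGroup E] [NormedSpace ℝ E]
    [CompleteSpace E] [SecondCountableTopology E] [MeasurableSpace E] [BorelSpace E]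
    (hQ : Measurable Q) (hD : Integrable D ρ) {b : β → E} (hb : Measurable b) {B : Set β}
    (hB : MeasurableSet B) (hDb : ∀ᵐ a ∂ρ, Q a ∉ B → D a = b (Q a)) :
    ∃ u : β → E, Measurable u ∧ (∀ y ∉ B, u y = 0) ∧
      (fun a => b (Q a) + u (Q a)) =ᵐ[ρ] ρ[D | MeasurableSpace.comap Q inferInstance] := by
  obtain ⟨e, he, hcond⟩ := (stronglyMeasurable_condExp (μ := ρ) (f := D)
    (m := MeasurableSpace.comap Q inferInstance)).exists_eq_measurable_comp
  have off_B : ∀ᵐ a ∂ρ, Q a ∈ Bᶜ → ρ[D | MeasurableSpace.comap Q inferInstance] a = b (Q a) :=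
    condExp_ae_eq_of_ae_eq_of_mem hQ.comap_le ⟨Bᶜ, hB.compl, rfl⟩
      (hb.stronglyMeasurable.comp_measurable (comap_measurable Q)) hD hDb
  refine ⟨B.indicator (e - b), (he.measurable.sub hb).indicator hB,
    fun y hy => indicator_of_notMem hy _, ?_⟩
  filter_upwards [off_B] with a ha
  by_cases haB : Q a ∈ B
  · rw [indicator_of_mem haB, hcond, Pi.sub_apply, add_sub_cancel, comp_apply]
  · rw [indicator_of_notMem haB, add_zero, ha haB]

theorem setIntegral_inner_comp_condExp [NormedAddCommGroup E] [InnerProductSpace ℝ E]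
    [CompleteSpace E] (hQ : Measurable Q) (hD : Integrable D ρ) {g : β → E}
    (hg : StronglyMeasurable g) {G : ℝ} (hG : ∀ y, ‖g y‖ ≤ G) {B : Set β} (hB : MeasurableSet B) :
    ∫ a in Q ⁻¹' B, inner ℝ (g (Q a)) (ρ[D | MeasurableSpace.comap Q inferInstance] a) ∂ρ
      = ∫ a in Q ⁻¹' B, inner ℝ (g (Q a)) (D a) ∂ρ := by
  have hgQ : StronglyMeasurable[MeasurableSpace.comap Q inferInstance] (g ∘ Q) :=
    hg.comp_measurable (comap_measurable Q)
  have hint : Integrable (fun a => innerSL ℝ (g (Q a)) (D a)) ρ :=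
    (innerSL ℝ).integrable_of_bilin_of_bdd_left G (hgQ.mono hQ.comap_le).aestronglyMeasurable
      (.of_forall fun a => hG (Q a)) hD
  calc _ = ∫ a in Q ⁻¹' B,
        ρ[fun a => innerSL ℝ (g (Q a)) (D a) | MeasurableSpace.comap Q inferInstance] a ∂ρ :=
        integral_congr_ae (ae_restrict_of_ae
          (condExp_bilin_of_stronglyMeasurable_left (innerSL ℝ) hgQ hint hD).symm)
    _ = _ := setIntegral_condExp hQ.comap_le hint ⟨B, hB, rfl⟩

end ConditionalExpectation

section MeanVelocity

variable {α E : Type*} [MeasurableSpace α] {P : Measure α} {T : ℝ} {X V : ℝ → α → E}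
  {w : E → ℝ → E}

/-- The position at time `q.1` of the particle labelled `q.2`, together with that time. -/
def positionTime (X : ℝ → α → E) (q : ℝ × α) : E × ℝ := (X q.1 q.2, q.1)

theorem measurable_positionTime [MeasurableSpace E] (hX : Measurable (uncurry X)) :
    Measurable (positionTime X) := hX.prodMk measurable_fst

/-- The field `w` is the mean velocity of the particles present at a given place and time, when
the labels of the particles are distributed according to `P`: it is the conditional expectation of
the velocity given position and time. -/
def IsMeanVelocity [MeasurableSpace E] [NormedAddCommGroup E] [NormedSpace ℝ E]
    (P : Measure α) (T : ℝ) (X V : ℝ → α → E) (w : E → ℝ → E) : Prop :=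
  (fun q => w (X q.1 q.2) q.1) =ᵐ[(volume.restrict (Icc 0 T)).prod P]
    ((volume.restrict (Icc 0 T)).prod P)[uncurry V |
      MeasurableSpace.comap (positionTime X) inferInstance]

theorem restrict_prod_restrict_fst_preimage {α β : Type*} [MeasurableSpace α] [MeasurableSpace β]
    {μ : Measure α} [SFinite μ] {ν : Measure β} [SFinite ν] {r s : Set α} (hs : MeasurableSet s)
    (hsr : s ⊆ r) :
    ((μ.restrict r).prod ν).restrict (Prod.fst ⁻¹' s) = (μ.restrict s).prod ν := by
  rw [← prod_univ, ← Measure.prod_restrict, Measure.restrict_restrict hs, inter_eq_left.2 hsr,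
    Measure.restrict_univ]

theorem integrable_restrict_Icc_prod_of_le {F : Type*} [NormedAddCommGroup F] [SFinite P]
    {f : ℝ × α → F} (hf : Integrable f ((volume.restrict (Icc 0 T)).prod P)) {t : ℝ}
    (ht : t ≤ T) : Integrable f ((volume.restrict (Icc 0 t)).prod P) := by
  rw [← restrict_prod_restrict_fst_preimage measurableSet_Icc (Icc_subset_Icc_right ht)]
  exact hf.restrict

theorem lintegral_nnnorm_map_lt_top [MeasurableSpace E] [NormedAddCommGroup E]
    [OpensMeasurableSpace E] [SFinite P] (hX : Measurable (uncurry X))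
    (hw : Measurable (uncurry w))
    (hint : Integrable (fun q => w (X q.1 q.2) q.1) ((volume.restrict (Icc 0 T)).prod P)) :
    ∫⁻ t in Icc 0 T, ∫⁻ x, (‖w x t‖₊ : ℝ≥0∞) ∂P.map (X t) < ⊤ := by
  have hwX : Measurable fun q : ℝ × α => w (X q.1 q.2) q.1 := hw.comp (measurable_positionTime hX)
  calc ∫⁻ t in Icc 0 T, ∫⁻ x, (‖w x t‖₊ : ℝ≥0∞) ∂P.map (X t)
      = ∫⁻ t in Icc 0 T, ∫⁻ a, (‖w (X t a) t‖₊ : ℝ≥0∞) ∂P := lintegral_congr fun t =>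
        lintegral_map hw.of_uncurry_right.enorm hX.of_uncurry_left
    _ = ∫⁻ q, ‖w (X q.1 q.2) q.1‖ₑ ∂(volume.restrict (Icc 0 T)).prod P :=
        (lintegral_prod _ hwX.enorm.aemeasurable).symm
    _ < ⊤ := hint.hasFiniteIntegral

theorem exists_isMeanVelocity [MeasurableSpace E] [NormedAddCommGroup E] [NormedSpace ℝ E]
    [CompleteSpace E] [SecondCountableTopology E] [BorelSpace E] [IsFiniteMeasure P]
    {v : E → E} {ω : Set E} (hv : Measurable v) (hω : MeasurableSet ω)
    (hX : Measurable (uncurry X)) (hV : Integrable (uncurry V) ((volume.restrict (Icc 0 T)).prod P))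
    (hdrift : ∀ᵐ q ∂(volume.restrict (Icc 0 T)).prod P,
      X q.1 q.2 ∉ ω → V q.1 q.2 = v (X q.1 q.2)) :
    ∃ u : E → ℝ → E, Measurable (fun q : E × ℝ => u q.1 q.2) ∧ (∀ x t, x ∉ ω → u x t = 0) ∧
      IsMeanVelocity P T X V fun x t => v x + u x t := by
  obtain ⟨u, hu, hu_zero, hmean⟩ := exists_measurable_add_comp_ae_eq_condExp
    (measurable_positionTime hX) hV (hv.comp measurable_fst) (measurable_fst hω) hdrift
  exact ⟨fun x t => u (x, t), hu, fun x t hx => hu_zero (x, t) hx, hmean⟩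

namespace IsMeanVelocity

variable [MeasurableSpace E] [NormedAddCommGroup E]

theorem integrable [NormedSpace ℝ E] [CompleteSpace E] (h : IsMeanVelocity P T X V w) :
    Integrable (fun q => w (X q.1 q.2) q.1) ((volume.restrict (Icc 0 T)).prod P) :=
  integrable_condExp.congr h.symm

theorem integral_inner_eq [InnerProductSpace ℝ E] [CompleteSpace E] [IsFiniteMeasure P]
    (h : IsMeanVelocity P T X V w) (hX : Measurable (uncurry X))
    (hV : Integrable (uncurry V) ((volume.restrict (Icc 0 T)).prod P)) {g : E → E}
    (hg : StronglyMeasurable g) {G : ℝ} (hG : ∀ x, ‖g x‖ ≤ G) {t : ℝ} (ht : t ≤ T) :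
    ∫ q, inner ℝ (g (X q.1 q.2)) (w (X q.1 q.2) q.1) ∂(volume.restrict (Icc 0 t)).prod P
      = ∫ q, inner ℝ (g (X q.1 q.2)) (V q.1 q.2) ∂(volume.restrict (Icc 0 t)).prod P := by
  rw [← restrict_prod_restrict_fst_preimage measurableSet_Icc (Icc_subset_Icc_right ht)]
  refine Eq.trans (integral_congr_ae (ae_restrict_of_ae ?_))
    (setIntegral_inner_comp_condExp (measurable_positionTime hX) hV
      (hg.comp_measurable measurable_fst) (fun y => hG y.1) (measurable_snd measurableSet_Icc))
  filter_upwards [h] with q hq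
  exact congrArg (inner ℝ (g (X q.1 q.2))) hq

end IsMeanVelocity

end MeanVelocity

section ContinuityEquation

section Gradient

variable {E : Type*} [NormedAddCommGroup E] [InnerProductSpace ℝ E] [CompleteSpace E] {ψ : E → ℝ}

theorem continuous_gradient_of_contDiff_one (hψ : ContDiff ℝ 1 ψ) : Continuous (gradient ψ) :=
  (InnerProductSpace.toDual ℝ E).symm.continuous.comp (hψ.continuous_fderiv one_ne_zero)

theorem exists_norm_gradient_le (hψ : ContDiff ℝ 1 ψ) (hψc : HasCompactSupport ψ) :
    ∃ G, ∀ x, ‖gradient ψ x‖ ≤ G :=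
  (continuous_gradient_of_contDiff_one hψ).bounded_above_of_compact_support
    ((hψc.fderiv ℝ).comp_left (map_zero (InnerProductSpace.toDual ℝ E).symm))

theorem HasVelocityOn.sub_eq_setIntegral_inner_gradient {T t : ℝ} {γ γ' : ℝ → E}
    (h : HasVelocityOn T γ γ') (hψ : Differentiable ℝ ψ) (ht : t ∈ Icc 0 T)
    (hint : IntegrableOn (fun r => inner ℝ (gradient ψ (γ r)) (γ' r)) (Icc 0 t)) :
    ψ (γ t) - ψ (γ 0) = ∫ r in Icc 0 t, inner ℝ (gradient ψ (γ r)) (γ' r) := by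
  obtain ⟨S, hS, hderiv⟩ := h.hasDerivAt
  rw [integral_Icc_eq_integral_Ioc, ← intervalIntegral.integral_of_le ht.1]
  refine (integral_eq_of_hasDerivAt_off_countable_of_le (fun r => ψ (γ r)) _ ht.1 hS
    (hψ.continuous.comp_continuousOn (h.continuousOn.mono (Icc_subset_Icc_right ht.2)))
    (fun r hr => ?_) ((intervalIntegrable_iff_integrableOn_Icc_of_le ht.1).2 hint)).symm
  exact (hψ (γ r)).hasGradientAt.hasFDerivAt.comp_hasDerivAt r
    (hderiv r ⟨⟨hr.1.1, hr.1.2.trans_le ht.2⟩, hr.2⟩)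

end Gradient

variable {d : ℕ} {α : Type*} [MeasurableSpace α] {P : Measure α} [IsFiniteMeasure P] {T : ℝ}
  {X V : ℝ → α → Euc d} {w : Euc d → ℝ → Euc d}

theorem IsMeanVelocity.isWeakSolutionOn (h : IsMeanVelocity P T X V w)
    (hX : Measurable (uncurry X)) (hw : Measurable (uncurry w))
    (hV : Integrable (uncurry V) ((volume.restrict (Icc 0 T)).prod P))
    (hvel : ∀ᵐ a ∂P, HasVelocityOn T (X · a) (V · a)) :
    IsWeakSolutionOn T w fun t => P.map (X t) := by
  refine ⟨lintegral_nnnorm_map_lt_top hX hw h.integrable, fun ψ hψ hψc t ht => ?_⟩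
  have hψ₁ : ContDiff ℝ 1 ψ := hψ.of_le (mod_cast le_top)
  have hgrad := (continuous_gradient_of_contDiff_one hψ₁).measurable
  obtain ⟨G, hG⟩ := exists_norm_gradient_le hψ₁ hψc
  have hXt (r : ℝ) : Measurable (X r) := hX.of_uncurry_left
  have hψX (r : ℝ) : Integrable (fun a => ψ (X r a)) P :=
    (hψ.continuous.integrable_of_hasCompactSupport hψc).comp_measurable (hXt r)
  have hint {F : ℝ × α → Euc d} (hF : Integrable F ((volume.restrict (Icc 0 T)).prod P)) :
      Integrable (fun q => inner ℝ (gradient ψ (X q.1 q.2)) (F q))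
        ((volume.restrict (Icc 0 t)).prod P) :=
    (innerSL ℝ).integrable_of_bilin_of_bdd_left G (hgrad.comp hX).aestronglyMeasurable
      (.of_forall fun _ => hG _) (integrable_restrict_Icc_prod_of_le hF ht.2)
  calc ∫ x, ψ x ∂P.map (X t) - ∫ x, ψ x ∂P.map (X 0)
      = ∫ a, (ψ (X t a) - ψ (X 0 a)) ∂P := by
        rw [integral_map (hXt t).aemeasurable hψ.continuous.aestronglyMeasurable,
          integral_map (hXt 0).aemeasurable hψ.continuous.aestronglyMeasurable,
          integral_sub (hψX t) (hψX 0)]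
    _ = ∫ a, (∫ r in Icc 0 t, inner ℝ (gradient ψ (X r a)) (V r a)) ∂P := by
        refine integral_congr_ae ?_
        filter_upwards [hvel, (hint hV).prod_left_ae] with a ha hint_a
        exact ha.sub_eq_setIntegral_inner_gradient (hψ₁.differentiable one_ne_zero) ht hint_a
    _ = ∫ q, inner ℝ (gradient ψ (X q.1 q.2)) (V q.1 q.2) ∂(volume.restrict (Icc 0 t)).prod P :=
        (integral_prod_symm _ (hint hV)).symm
    _ = ∫ q, inner ℝ (gradient ψ (X q.1 q.2)) (w (X q.1 q.2) q.1)
          ∂(volume.restrict (Icc 0 t)).prod P :=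
        (h.integral_inner_eq hX hV hgrad.stronglyMeasurable hG ht.2).symm
    _ = ∫ r in Icc 0 t, ∫ a, inner ℝ (gradient ψ (X r a)) (w (X r a) r) ∂P :=
        integral_prod _ (hint h.integrable)
    _ = ∫ r in Icc 0 t, ∫ x, inner ℝ (gradient ψ x) (w x r) ∂P.map (X r) := by
        congr with r
        exact (integral_map (hXt r).aemeasurable
          (hgrad.inner hw.of_uncurry_right).aestronglyMeasurable).symm

end ContinuityEquation

section Control

variable {d : ℕ}

theorem msupport_eq_support (μ : Measure (Euc d)) : msupport μ = μ.support := by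
  rw [Measure.support_eq_forall_isOpen]
  exact Set.ext fun x => forall_congr' fun U => forall_comm

theorem ae_mem_msupport (μ : Measure (Euc d)) : ∀ᵐ x ∂μ, x ∈ msupport μ := by
  rw [msupport_eq_support]
  exact Measure.support_mem_ae

theorem isCompact_msupport_of_ae_norm_le {μ : Measure (Euc d)} {C : ℝ} (h : ∀ᵐ x ∂μ, ‖x‖ ≤ C) :
    IsCompact (msupport μ) := by
  rw [msupport_eq_support]
  refine (isCompact_closedBall 0 C).of_isClosed_subset Measure.isClosed_support
    (Measure.support_subset_of_isClosed isClosed_closedBall ?_)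
  filter_upwards [h] with x hx using mem_closedBall_zero_iff.2 hx

variable {α : Type*} [MeasurableSpace α] {v : Euc d → Euc d} {ω : Set (Euc d)} {T : ℝ}
  {f g : α → Euc d} {s : Set α} {P : Measure α} [IsFiniteMeasure P]

theorem Steerable.exists_control (h : Steerable v ω T f g s) (hv : Measurable v)
    (hω : MeasurableSet ω) (hs : ∀ᵐ a ∂P, a ∈ s) :
    ∃ (u : Euc d → ℝ → Euc d) (μ : ℝ → Measure (Euc d)),
      Measurable (fun q : Euc d × ℝ => u q.1 q.2) ∧
      (∀ x t, x ∉ ω → u x t = 0) ∧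
      (∀ t ∈ Icc (0 : ℝ) T, IsCompact (msupport (μ t))) ∧
      IsWeakSolutionOn T (fun x t => v x + u x t) μ ∧
      μ 0 = P.map f ∧ μ T = P.map g := by
  obtain ⟨X, V, h⟩ := h
  obtain ⟨C, hC⟩ := h.isBounded.exists_norm_le
  have hbound {t : ℝ} (ht : t ∈ Icc 0 T) {a : α} (ha : a ∈ s) : ‖X t a‖ ≤ C ∧ ‖V t a‖ ≤ C :=
    norm_prod_le_iff.1 (hC _ (mem_image2_of_mem ht ha))
  have hae : ∀ᵐ q ∂(volume.restrict (Icc 0 T)).prod P, q.1 ∈ Icc 0 T ∧ q.2 ∈ s :=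
    (Measure.quasiMeasurePreserving_fst.ae (ae_restrict_mem measurableSet_Icc)).and
      (Measure.quasiMeasurePreserving_snd.ae hs)
  have hV : Integrable (uncurry V) ((volume.restrict (Icc 0 T)).prod P) :=
    .of_bound h.measurable_velocity.aestronglyMeasurable C
      (hae.mono fun _ hq => (hbound hq.1 hq.2).2)
  obtain ⟨u, hu, hu_zero, hmean⟩ := exists_isMeanVelocity hv hω h.measurable_position hV
    (hae.mono fun q hq => (h.isControlledCurve q.2 hq.2).eq_drift q.1 hq.1)
  refine ⟨u, fun t => P.map (X t), hu, hu_zero, fun t ht => ?_, ?_,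
    Measure.map_congr (hs.mono h.initial), Measure.map_congr (hs.mono h.final)⟩
  · refine isCompact_msupport_of_ae_norm_le (C := C) ?_
    rw [ae_map_iff h.measurable_position.of_uncurry_left.aemeasurable
      (measurableSet_le measurable_norm measurable_const)]
    exact hs.mono fun a ha => (hbound ht ha).1
  · exact hmean.isWeakSolutionOn h.measurable_position ((hv.comp measurable_fst).add hu) hV
      (hs.mono fun a ha => (h.isControlledCurve a ha).toHasVelocityOn)

end Control

/-- Exact controllability of the transport equation with a Borel localized
control, under the geometric condition. -/
theorem exact_controllability_borel
    (d : ℕ) (ω : Set (Euc d)) (hω : ω.Nonempty) (hωo : IsOpen ω) (hωc : IsConnected ω)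
    (v : Euc d → Euc d) (hvL : ∃ K : ℝ≥0, LipschitzWith K v)
    (hvB : ∃ C : ℝ, ∀ x, ‖v x‖ ≤ C)
    (μ0 μ1 : Measure (Euc d)) [IsProbabilityMeasure μ0] [IsProbabilityMeasure μ1]
    (h0K : IsCompact (msupport μ0)) (h1K : IsCompact (msupport μ1))
    (Φv : ℝ → Euc d → Euc d) (hΦv : IsFlow (fun x _ => v x) Φv)
    (hgeo0 : ∀ x ∈ msupport μ0, ∃ t : ℝ, 0 < t ∧ Φv t x ∈ ω)
    (hgeo1 : ∀ x ∈ msupport μ1, ∃ t : ℝ, 0 < t ∧ Φv (-t) x ∈ ω) :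
    ∃ T : ℝ, 0 < T ∧
      ∃ (u : Euc d → ℝ → Euc d) (μ : ℝ → Measure (Euc d)),
        Measurable (fun q : Euc d × ℝ => u q.1 q.2) ∧
        (∀ x t, x ∉ ω → u x t = 0) ∧
        (∀ t ∈ Icc (0:ℝ) T, IsCompact (msupport (μ t))) ∧
        IsWeakSolutionOn T (fun x t => v x + u x t) μ ∧
        μ 0 = μ0 ∧ μ T = μ1 := by
  obtain ⟨K, hK⟩ := hvL
  obtain ⟨C, hC⟩ := hvB
  obtain ⟨p, hp⟩ := hω
  have hωp := hωc.isPreconnected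
  obtain ⟨T₁, gather, hT₁⟩ : ∃ T, Steerable v ω T id (fun _ => p) (msupport μ0) ∧ 0 < T :=
    ((hΦv.eventually_steerable_const hK hC hωo hωp hp h0K fun x hx =>
      (hgeo0 x hx).imp fun _ => .imp_left le_of_lt).and (eventually_gt_atTop 0)).exists
  obtain ⟨T₂, gather_back, hT₂⟩ :
      ∃ T, Steerable (fun x => -v x) ω T id (fun _ => p) (msupport μ1) ∧ 0 < T :=
    ((hΦv.neg.eventually_steerable_const hK.neg (fun x => (norm_neg _).trans_le (hC x)) hωo hωp
      hp h1K fun x hx => (hgeo1 x hx).imp fun _ => .imp_left le_of_lt).and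
        (eventually_gt_atTop 0)).exists
  have spread : Steerable v ω T₂ (fun _ => p) id (msupport μ1) := by
    simpa only [neg_neg] using gather_back.reverse
  have hae : ∀ᵐ q ∂μ0.prod μ1, q ∈ msupport μ0 ×ˢ msupport μ1 :=
    (Measure.quasiMeasurePreserving_fst.ae (ae_mem_msupport μ0)).and
      (Measure.quasiMeasurePreserving_snd.ae (ae_mem_msupport μ1))
  have steer := Steerable.prod_of_const hT₁.le hT₂.le gather spread
  refine ⟨T₁ + T₂, add_pos hT₁ hT₂, ?_⟩
  simpa only [id_comp, measurePreserving_fst.map_eq, measurePreserving_snd.map_eq] using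
    steer.exists_control hK.continuous.measurable hωo.measurableSet hae
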